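/- arXiv:1404.1363 — 2 statements merged into one kernel-verified Lean document; each statement's English description precedes it below -/
import Mathlib

section
/- Fix s ∈ (0,1). If s ≤ 1/2, then α ↦ q(s,α) is strictly decreasing on (0,2s). If s ≥ 1/2, then q(s,α) = q(s, 2s−1−α) for every α ∈ (0, 2s−1), q(s, 2s−1) = 1/(2s) when s > 1/2, and q(s,·) is strictly decreasing on (2s−1, 2s). Moreover, if s > 1/2 then q(s,1) = 1/(2s) + 1/(1−2s). -/
/-!
Put `c = 2s − 1`. The numerator `(t^α − 1)(1 − t^{c−α}) = t^α + t^{c−α} − 1 − t^c` is invariant under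
`α ↦ c − α`, and it vanishes at `α = c`. For `α < β` with `c < α + β`, passing from `α` to `β`
increases it by `(t^α − t^β)(t^{c−α−β} − 1) > 0` on `(0,1)` (`numerator_lt`), so the integral is
strictly increasing in `α` wherever `2α ≥ c`, in particular on both intervals in question. Strictness
of the integral inequality needs integrability, which follows by comparison with the Beta density
`t^m (1−t)^{1−2s}`, `m = min (c−α) 0 > −1`, using the Bernoulli-type bound `abs_rpow_sub_one_le`.
For `α = 1` (and `s > 1/2`) the integrand is `(t^{2s−2} − 1)(1−t)^{−2s}`, with primitive
`(t^c − 1)(1−t)^{−c} / c`.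
-/

open MeasureTheory Filter Set Topology

/-- For `s ∈ (0,1)` and `α ∈ (0,2s)`,
`q(s,α) = 1/(2s) − ∫₀¹ (t^α − 1)(1 − t^{2s−1−α})/(1−t)^{1+2s} dt`. -/
noncomputable def qfun (s α : ℝ) : ℝ :=
  1 / (2 * s) -
    ∫ t in Set.Ioo (0:ℝ) 1, (t ^ α - 1) * (1 - t ^ (2 * s - 1 - α)) / (1 - t) ^ (1 + 2 * s)

/-- A consequence of Bernoulli's inequality, controlling `t^a − 1` at both endpoints of `(0,1)`: it is
`O(1 − t)` at `1`, and blows up at `0` no faster than `t^{min a 0}`. -/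
theorem abs_rpow_sub_one_le {t : ℝ} (ht : t ∈ Ioo (0:ℝ) 1) (a : ℝ) :
    |t ^ a - 1| ≤ (1 + |a|) * (1 - t) * t ^ (min a 0) := by
  obtain ⟨h0, h1⟩ := ht
  have key : ∀ b : ℝ, 0 ≤ b → 0 ≤ 1 - t ^ b ∧ 1 - t ^ b ≤ (1 + b) * (1 - t) := by
    intro b hb
    have e1 : t ^ b ≤ 1 := Real.rpow_le_one h0.le h1.le hb
    have e2 : t ^ (1 + b) ≤ t ^ b := Real.rpow_le_rpow_of_exponent_ge h0 h1.le (by linarith)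
    have e3 := one_add_mul_self_le_rpow_one_add (s := t - 1) (by linarith) (p := 1 + b) (by linarith)
    rw [show 1 + (t - 1) = t by ring] at e3
    constructor <;> nlinarith
  rcases le_or_gt 0 a with ha | ha
  · obtain ⟨k1, k2⟩ := key a ha
    rw [min_eq_right ha, Real.rpow_zero, abs_of_nonneg ha, abs_sub_comm, abs_of_nonneg k1]
    linarith
  · obtain ⟨k1, k2⟩ := key (-a) (by linarith)
    have hp : 0 < t ^ a := Real.rpow_pos_of_pos h0 a
    have e : t ^ a - 1 = t ^ a * (1 - t ^ (-a)) := by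
      rw [Real.rpow_neg h0.le]; field_simp
    rw [min_eq_left ha.le, abs_of_neg ha, e, abs_mul, abs_of_pos hp, abs_of_nonneg k1, mul_comm]
    exact mul_le_mul_of_nonneg_right k2 hp.le

theorem integrableOn_beta {m n : ℝ} (hm : -1 < m) (hn : -1 < n) :
    IntegrableOn (fun t : ℝ => t ^ m * (1 - t) ^ n) (Ioo 0 1) := by
  have h := Complex.betaIntegral_convergent (u := (m + 1 : ℝ)) (v := (n + 1 : ℝ))
    (by rw [Complex.ofReal_re]; linarith) (by rw [Complex.ofReal_re]; linarith)
  rw [intervalIntegrable_iff_integrableOn_Ioo_of_le zero_le_one] at h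
  refine IntegrableOn.congr_fun h.norm ?_ measurableSet_Ioo
  intro t ht
  have e : (1 - (t:ℂ)) = ((1 - t : ℝ) : ℂ) := by push_cast; ring
  simp only [norm_mul, e]
  rw [Complex.norm_cpow_eq_rpow_re_of_pos ht.1, Complex.norm_cpow_eq_rpow_re_of_pos (by linarith [ht.2])]
  simp

theorem integrableOn_qfun {s α : ℝ} (hs : s ∈ Ioo (0:ℝ) 1) (hα : α ∈ Ioo 0 (2 * s)) :
    IntegrableOn (fun t : ℝ =>
      (t ^ α - 1) * (1 - t ^ (2 * s - 1 - α)) / (1 - t) ^ (1 + 2 * s)) (Ioo 0 1) := by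
  set b := 2 * s - 1 - α with hb
  have hm : -1 < min b 0 := lt_min (by linarith [hα.2]) (by norm_num)
  have hn : -1 < 1 - 2 * s := by linarith [hs.2]
  refine Integrable.mono' ((integrableOn_beta hm hn).const_mul ((1 + |α|) * (1 + |b|))) ?_ ?_
  · exact (by fun_prop : Measurable _).aestronglyMeasurable
  · refine (ae_restrict_iff' measurableSet_Ioo).2 (ae_of_all _ fun t ht => ?_)
    have h1 := abs_rpow_sub_one_le ht α
    have h2 := abs_rpow_sub_one_le ht b
    rw [min_eq_right hα.1.le, Real.rpow_zero, mul_one] at h1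
    have hu : 0 < 1 - t := by linarith [ht.2]
    have hP : 0 < (1 - t) ^ (1 + 2 * s) := Real.rpow_pos_of_pos hu _
    have e : (1 - t) ^ (1 - 2 * s) * (1 - t) ^ (1 + 2 * s) = (1 - t) * (1 - t) := by
      rw [← Real.rpow_add hu, show 1 - 2 * s + (1 + 2 * s) = (2:ℕ) by push_cast; ring,
        Real.rpow_natCast, sq]
    rw [Real.norm_eq_abs, abs_div, abs_mul, abs_of_pos hP, div_le_iff₀ hP, abs_sub_comm 1]
    calc |t ^ α - 1| * |t ^ b - 1|
        ≤ ((1 + |α|) * (1 - t)) * ((1 + |b|) * (1 - t) * t ^ (min b 0)) :=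
          mul_le_mul h1 h2 (abs_nonneg _) (by positivity)
      _ = (1 + |α|) * (1 + |b|) * (t ^ (min b 0)) * ((1 - t) * (1 - t)) := by ring
      _ = _ := by rw [← e]; ring

theorem numerator_lt {t c α β : ℝ} (ht : t ∈ Ioo (0:ℝ) 1) (hlt : α < β) (hc : c < α + β) :
    (t ^ α - 1) * (1 - t ^ (c - α)) < (t ^ β - 1) * (1 - t ^ (c - β)) := by
  obtain ⟨h0, h1⟩ := ht
  have e1 : t ^ β < t ^ α := Real.rpow_lt_rpow_of_exponent_gt h0 h1 hlt
  have e2 : 1 < t ^ (c - α - β) := Real.one_lt_rpow_of_pos_of_lt_one_of_neg h0 h1 (by linarith)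
  have e3 : t ^ (c - β) = t ^ (c - α - β) * t ^ α := by
    rw [← Real.rpow_add h0]; congr 1; ring
  have e4 : t ^ (c - α) = t ^ (c - α - β) * t ^ β := by
    rw [← Real.rpow_add h0]; congr 1; ring
  rw [e3, e4]
  nlinarith [mul_pos (sub_pos.2 e1) (sub_pos.2 e2)]

theorem qfun_lt {s α β : ℝ} (hs : s ∈ Ioo (0:ℝ) 1) (hα : α ∈ Ioo 0 (2 * s))
    (hβ : β ∈ Ioo 0 (2 * s)) (hlt : α < β) (hc : 2 * s - 1 < α + β) :
    qfun s β < qfun s α := by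
  have iα := integrableOn_qfun hs hα
  have iβ := integrableOn_qfun hs hβ
  have hpos := intervalIntegral.intervalIntegral_pos_of_pos_on
    ((intervalIntegrable_iff_integrableOn_Ioo_of_le zero_le_one).2 (iβ.sub iα))
    (fun t ht => by
      have hP : 0 < (1 - t) ^ (1 + 2 * s) := Real.rpow_pos_of_pos (by linarith [ht.2]) _
      exact sub_pos.2 (div_lt_div_of_pos_right (numerator_lt ht hlt hc) hP)) zero_lt_one
  rw [intervalIntegral.integral_of_le zero_le_one, integral_Ioc_eq_integral_Ioo] at hpos
  simp only [Pi.sub_apply] at hpos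
  rw [integral_sub iβ iα] at hpos
  unfold qfun
  linarith

theorem qfun_one {s : ℝ} (hs : s ∈ Ioo (0:ℝ) 1) (h : 1 / 2 < s) :
    qfun s 1 = 1 / (2 * s) + 1 / (1 - 2 * s) := by
  have hc : 0 < 2 * s - 1 := by linarith
  have hi := integrableOn_qfun (α := 1) hs ⟨one_pos, by linarith⟩
  have key := intervalIntegral.integral_eq_sub_of_hasDerivAt_of_tendsto
    (f := fun t : ℝ => (t ^ (2 * s - 1) - 1) * (1 - t) ^ (1 - 2 * s) / (2 * s - 1))
    (a := 0) (b := 1) (fa := -1 / (2 * s - 1)) (fb := 0) zero_lt_one (fun t ht => ?_)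
    ((intervalIntegrable_iff_integrableOn_Ioo_of_le zero_le_one).2 hi) ?_ ?_
  · rw [intervalIntegral.integral_of_le zero_le_one, integral_Ioc_eq_integral_Ioo] at key
    unfold qfun
    rw [key, ← neg_sub (2 * s) 1, div_neg]
    ring
  · have hu : 0 < 1 - t := by linarith [ht.2]
    have h0 := ht.1
    have d1 := (Real.hasDerivAt_rpow_const (x := t) (p := 2 * s - 1) (Or.inl h0.ne')).sub_const 1
    have d2 := ((hasDerivAt_id t).const_sub 1).rpow_const (p := 1 - 2 * s) (Or.inl hu.ne')
    refine ((d1.mul d2).div_const (2 * s - 1)).congr_deriv ?_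
    simp only [id]
    have p1 : t ^ (2 * s - 1) = t ^ (2 * s - 1 - 1) * t := by
      rw [← Real.rpow_add_one h0.ne']; congr 1; ring
    have p2 : (1 - t) ^ (1 - 2 * s) = (1 - t) ^ (1 - 2 * s - 1) * (1 - t) := by
      rw [← Real.rpow_add_one hu.ne']; congr 1; ring
    have p3 : (1 - t) ^ (1 + 2 * s) = (1 - t) / (1 - t) ^ (1 - 2 * s - 1) := by
      rw [eq_div_iff (Real.rpow_pos_of_pos hu _).ne', ← Real.rpow_add hu]
      rw [show 1 + 2 * s + (1 - 2 * s - 1) = 1 by ring, Real.rpow_one]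
    rw [p3, p2, p1]
    have := (Real.rpow_pos_of_pos hu (1 - 2 * s - 1)).ne'
    simp only [Real.rpow_one]
    field_simp
    ring
  · have : ContinuousAt
        (fun t : ℝ => (t ^ (2 * s - 1) - 1) * (1 - t) ^ (1 - 2 * s) / (2 * s - 1)) 0 := by
      refine ContinuousAt.div_const (ContinuousAt.mul ?_ ?_) _
      · exact (Real.continuousAt_rpow_const _ _ (Or.inr hc.le)).sub continuousAt_const
      · exact ContinuousAt.rpow_const (by fun_prop) (Or.inl (by norm_num))
    have h' := this.tendsto
    simp only [Real.zero_rpow hc.ne', sub_zero, zero_sub, Real.one_rpow, mul_one] at h'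
    exact h'.mono_left nhdsWithin_le_nhds
  · have lim : Tendsto (fun t : ℝ => (1 + |2 * s - 1|) / (2 * s - 1) * (1 - t) ^ (2 - 2 * s))
        (𝓝[<] 1) (𝓝 0) := by
      have : ContinuousAt
          (fun t : ℝ => (1 + |2 * s - 1|) / (2 * s - 1) * (1 - t) ^ (2 - 2 * s)) 1 := by
        refine continuousAt_const.mul (ContinuousAt.rpow_const (by fun_prop) (Or.inr ?_))
        linarith [hs.2]
      have h' := this.tendsto
      rw [sub_self, Real.zero_rpow (by linarith [hs.2]), mul_zero] at h'
      exact h'.mono_left nhdsWithin_le_nhds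
    refine squeeze_zero_norm' ?_ lim
    filter_upwards [Ioo_mem_nhdsLT (zero_lt_one (α := ℝ))] with t ht
    have hu : 0 < 1 - t := by linarith [ht.2]
    have h1 := abs_rpow_sub_one_le ht (2 * s - 1)
    rw [min_eq_right hc.le, Real.rpow_zero, mul_one] at h1
    have hP := Real.rpow_pos_of_pos hu (1 - 2 * s)
    rw [Real.norm_eq_abs, abs_div, abs_mul, abs_of_pos hP,
      show 2 - 2 * s = 1 - 2 * s + 1 by ring, Real.rpow_add_one hu.ne', div_mul_eq_mul_div,
      abs_of_pos hc]
    rw [abs_of_pos hc] at h1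
    refine div_le_div_of_nonneg_right ?_ hc.le
    linarith [mul_le_mul_of_nonneg_right h1 hP.le]


/-- Monotonicity and symmetry properties of `q(s,·)`: if `s ≤ 1/2` it is strictly
decreasing on `(0,2s)`; if `s ≥ 1/2` it is symmetric about `s − 1/2` (i.e.
`q(s,α) = q(s,2s−1−α)` for `α ∈ (0,2s−1)`), `q(s,2s−1) = 1/(2s)` when `s > 1/2`, and
`q(s,·)` is strictly decreasing on `(2s−1,2s)`; moreover if `s > 1/2` then
`q(s,1) = 1/(2s) + 1/(1−2s)`. -/
theorem stmt1 (s : ℝ) (hs : s ∈ Set.Ioo (0:ℝ) 1) :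
    (s ≤ 1 / 2 → StrictAntiOn (qfun s) (Set.Ioo 0 (2 * s))) ∧
    (1 / 2 ≤ s →
      (∀ α ∈ Set.Ioo (0:ℝ) (2 * s - 1), qfun s α = qfun s (2 * s - 1 - α)) ∧
      (1 / 2 < s → qfun s (2 * s - 1) = 1 / (2 * s)) ∧
      StrictAntiOn (qfun s) (Set.Ioo (2 * s - 1) (2 * s))) ∧
    (1 / 2 < s → qfun s 1 = 1 / (2 * s) + 1 / (1 - 2 * s)) := by
  refine ⟨fun h α hα β hβ hlt => ?_, fun h => ⟨fun α _ => ?_, fun _ => ?_,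
    fun α hα β hβ hlt => ?_⟩, qfun_one hs⟩
  · exact qfun_lt hs hα hβ hlt (by linarith [hα.1, hβ.1])
  · unfold qfun
    congr 2
    funext t
    rw [sub_sub_cancel]
    ring
  · simp [qfun]
  · have hα' : 0 < α := by linarith [hα.1]
    exact qfun_lt hs ⟨hα', hα.2⟩ ⟨hα'.trans hlt, hβ.2⟩ hlt (by linarith [hβ.1])
end

section
/- Let n ≥ 2, s ∈ (0,1), α ∈ (0,2s), and let x = (x′, xₙ) ∈ ℝⁿ with xₙ > 0. Then the principal-value limit lim_{ε→0⁺} ∫_{{y ∈ ℝⁿ : |yₙ − xₙ| > ε}} (ρ_α(xₙ) − ρ_α(yₙ))/|x − y|^{n+2s} dy exists and equals A(n,s) · q(s,α) · xₙ^{α−2s}; moreover for each ε > 0 the integral over {|yₙ − xₙ| > ε} is absolutely convergent. -/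
/-!
Integrating first over `y′ ∈ ℝ^{n-1}` on the hyperplane `yₙ = t`, the substitution
`y′ = x′ + |t - xₙ| w` turns the kernel `|x - y|^{-(n+2s)}` into `A(n,s) |t - xₙ|^{-(1+2s)}`
(`slice`, `fubini_prod`), and the substitution `t = xₙ τ` extracts the factor `xₙ^{α-2s}`
(`scaled_halfline`). What remains is the principal value at `1` of
`(1 - ρ_α(t)) / |t - 1|^{1+2s}` on the line.

On `t ≤ 0` the integral is `1/(2s)` (`left_aux`). On `t > 1 + δ` the inversion `t = 1/u` gives
the integrand `symmKernel - innerKernel` on `(0, 1/(1+δ))`, where `innerKernel` is the original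
integrand on `(0,1)` and `symmKernel` is minus the integrand in the definition of `q(s,α)`
(`outer_aux`). Adding the part over `(0, 1-δ)` therefore leaves `∫ symmKernel` over `(0, 1/(1+δ))`
minus `∫ innerKernel` over the short interval `[1-δ, 1/(1+δ))` (`unit_integrable`). The first tends
to the integral over `(0,1)`, as `symmKernel` is dominated by integrable Beta densities
(`symmKernel_integrableOn`); the second is an integral of a function of size `δ^{-2s}` over an
interval of length at most `δ²`, hence `O(δ^{2-2s})`, which vanishes since `s < 1`
(`inner_tendsto`).
-/

open MeasureTheory Filter Set Topology

/-- `ρ_α(t) = t^α` for `t > 0` and `ρ_α(t) = 0` for `t ≤ 0`. -/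
noncomputable def rhoPow (α t : ℝ) : ℝ := if 0 < t then t ^ α else 0

/-- `A(n,s) = ∫_{ℝ^{n−1}} (1+|z|²)^{−(n+2s)/2} dz`, with `n = m+1`. -/
noncomputable def Aconst (m : ℕ) (s : ℝ) : ℝ :=
  ∫ z : EuclideanSpace ℝ (Fin m), (1 + ‖z‖ ^ 2) ^ (-(((m : ℝ) + 1) + 2 * s) / 2)

/-! ### Elementary bounds and the Beta integral -/

lemma one_sub_rpow_le {b t : ℝ} (hb2 : b ≤ 2) (ht : t ∈ Ioo (0:ℝ) 1) :
    1 - t ^ b ≤ 2 * (1 - t) := by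
  have h := Real.rpow_le_rpow_of_exponent_ge ht.1 ht.2.le hb2
  have h2 : t ^ (2:ℝ) = t ^ 2 := by norm_cast
  rw [h2] at h
  nlinarith [sq_nonneg (1 - t)]

/-- A two-sided bound valid for exponents of either sign: for `b < 0` the difference `t ^ b - 1`
is `t ^ b * (1 - t ^ (-b))`, which explains the factor `1 + t ^ b`. -/
lemma abs_one_sub_rpow_le {b t : ℝ} (hb : -2 ≤ b) (hb2 : b ≤ 2) (ht : t ∈ Ioo (0:ℝ) 1) :
    |1 - t ^ b| ≤ 2 * (1 - t) * (1 + t ^ b) := by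
  have hp : 0 < t ^ b := Real.rpow_pos_of_pos ht.1 b
  have h1 := one_sub_rpow_le hb2 ht
  have h2 := one_sub_rpow_le (b := -b) (by linarith) ht
  have h3 : t ^ b * t ^ (-b) = 1 := by
    rw [← Real.rpow_add ht.1]; simp
  have h4 : 0 ≤ t ^ b * (2 * (1 - t) - (1 - t ^ (-b))) := mul_nonneg hp.le (by linarith)
  have h5 : 0 ≤ (1 - t) * t ^ b := mul_nonneg (by linarith [ht.2]) hp.le
  rw [abs_le]; constructor <;> nlinarith [ht.2]

lemma beta_integrableOn {u v : ℝ} (hu : -1 < u) (hv : -1 < v) :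
    IntegrableOn (fun t : ℝ => t ^ u * (1 - t) ^ v) (Ioo 0 1) := by
  have h := Complex.betaIntegral_convergent (u := ((u + 1 : ℝ) : ℂ)) (v := ((v + 1 : ℝ) : ℂ))
    (by rw [Complex.ofReal_re]; linarith) (by rw [Complex.ofReal_re]; linarith)
  rw [intervalIntegrable_iff_integrableOn_Ioo_of_le zero_le_one] at h
  have h2 : IntegrableOn (fun t : ℝ => RCLike.re ((t : ℂ) ^ (((u + 1 : ℝ) : ℂ) - 1) *
      (1 - (t : ℂ)) ^ (((v + 1 : ℝ) : ℂ) - 1))) (Ioo 0 1) := h.re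
  refine h2.congr_fun (fun t ht => ?_) measurableSet_Ioo
  have e1 : (t : ℂ) ^ (((u + 1 : ℝ) : ℂ) - 1) = ((t ^ u : ℝ) : ℂ) := by
    rw [Complex.ofReal_cpow ht.1.le]; congr 1; push_cast; ring
  have e2 : (1 - (t : ℂ)) ^ (((v + 1 : ℝ) : ℂ) - 1) = (((1 - t) ^ v : ℝ) : ℂ) := by
    rw [Complex.ofReal_cpow (by linarith [ht.2])]; congr 1 <;> push_cast <;> ring
  simp only [e1, e2, ← Complex.ofReal_mul]
  exact Complex.ofReal_re _

/-! ### The principal value on the line, based at `1` -/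

/-- Minus the integrand in the definition of `q(s,α)`. It is the contribution of `t` and of its
inverse `1/t` together to the principal value at `1`. -/
noncomputable def symmKernel (s α t : ℝ) : ℝ :=
  (1 - t ^ α) * (1 - t ^ (2 * s - 1 - α)) / (1 - t) ^ (1 + 2 * s)

/-- The integrand `(1 - ρ_α(t)) / |t - 1|^{1+2s}` of the principal value, for `0 < t < 1`. -/
noncomputable def innerKernel (s α t : ℝ) : ℝ := (1 - t ^ α) / (1 - t) ^ (1 + 2 * s)

@[fun_prop] lemma measurable_symmKernel (s α : ℝ) : Measurable (symmKernel s α) := by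
  unfold symmKernel; fun_prop

@[fun_prop] lemma measurable_innerKernel (s α : ℝ) : Measurable (innerKernel s α) := by
  unfold innerKernel; fun_prop

section
variable {s α : ℝ}

lemma innerKernel_nonneg (hα : 0 < α) {t : ℝ} (ht : t ∈ Ioo (0:ℝ) 1) :
    0 ≤ innerKernel s α t :=
  div_nonneg (by linarith [Real.rpow_le_one ht.1.le ht.2.le hα.le])
    (Real.rpow_nonneg (by linarith [ht.2]) _)

lemma innerKernel_le (hα2 : α ≤ 2) {t : ℝ} (ht : t ∈ Ioo (0:ℝ) 1) :
    innerKernel s α t ≤ 2 * (1 - t) ^ (-(2 * s)) := by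
  have h1 : 0 < 1 - t := by linarith [ht.2]
  have : 2 * (1 - t) ^ (-(2 * s)) = 2 * (1 - t) / (1 - t) ^ (1 + 2 * s) := by
    rw [Real.rpow_add h1, Real.rpow_neg h1.le, Real.rpow_one]; field_simp
  rw [this]
  exact div_le_div_of_nonneg_right (one_sub_rpow_le hα2 ht) (by positivity)

/-- Each factor of the numerator vanishes to first order at `1`, so `symmKernel` is at most a
multiple of `(1 + t ^ (2s-1-α)) (1 - t) ^ (1-2s)`, where both exponents exceed `-1`. -/
lemma symmKernel_integrableOn (hs : s ∈ Ioo (0:ℝ) 1) (hα : α ∈ Ioo (0:ℝ) (2 * s)) :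
    IntegrableOn (symmKernel s α) (Ioo 0 1) := by
  obtain ⟨hs0, hs1⟩ := hs
  obtain ⟨hα0, hα1⟩ := hα
  have hB := ((beta_integrableOn (u := 0) (v := 1 - 2 * s) (by norm_num) (by linarith)).add
    (beta_integrableOn (u := 2 * s - 1 - α) (v := 1 - 2 * s) (by linarith)
      (by linarith))).const_mul 4
  refine Integrable.mono' hB (measurable_symmKernel s α).aestronglyMeasurable ?_
  filter_upwards [ae_restrict_mem measurableSet_Ioo] with t ht
  have h1 : 0 < 1 - t := by linarith [ht.2]
  have hp : 0 < t ^ (2 * s - 1 - α) := Real.rpow_pos_of_pos ht.1 _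
  have hi := innerKernel_nonneg (s := s) hα0 ht
  have hi2 := innerKernel_le (s := s) (by linarith : α ≤ 2) ht
  have hb := abs_one_sub_rpow_le (b := 2 * s - 1 - α) (by linarith) (by linarith) ht
  have e : symmKernel s α t = innerKernel s α t * (1 - t ^ (2 * s - 1 - α)) := by
    unfold symmKernel innerKernel; ring
  have e2 : (1 - t) ^ (1 - 2 * s) = (1 - t) * (1 - t) ^ (-(2 * s)) := by
    rw [sub_eq_add_neg 1 (2 * s), Real.rpow_add h1, Real.rpow_one]
  rw [e, norm_mul, Real.norm_of_nonneg hi, Real.norm_eq_abs]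
  simp only [Pi.add_apply, Real.rpow_zero, e2]
  calc _ ≤ (2 * (1 - t) ^ (-(2 * s))) * (2 * (1 - t) * (1 + t ^ (2 * s - 1 - α))) :=
        mul_le_mul hi2 hb (abs_nonneg _) (by positivity)
    _ = _ := by ring

lemma innerKernel_integrableOn (hα : 0 < α) {c : ℝ} (hc1 : c < 1) :
    IntegrableOn (innerKernel s α) (Ioo 0 c) := by
  have : ContinuousOn (innerKernel s α) (Icc 0 c) := by
    unfold innerKernel
    refine ContinuousOn.div ?_ ?_ ?_
    · exact continuousOn_const.sub (continuousOn_id.rpow_const fun _ _ => Or.inr hα.le)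
    · exact (continuousOn_const.sub continuousOn_id).rpow_const
        fun t ht => Or.inl (sub_pos.2 (ht.2.trans_lt hc1)).ne'
    · intro t ht
      exact (Real.rpow_pos_of_pos (by linarith [ht.2]) _).ne'
  exact this.integrableOn_Icc.mono_set Ioo_subset_Icc_self

/-- The part `t > 1 + δ`, by the inversion `t = 1/u`. -/
lemma outer_aux (hs : s ∈ Ioo (0:ℝ) 1) (hα : α ∈ Ioo (0:ℝ) (2 * s)) {δ : ℝ} (hδ : 0 < δ) :
    IntegrableOn (fun t => (1 - rhoPow α t) / |t - 1| ^ (1 + 2 * s)) (Ioi (1 + δ)) ∧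
    ∫ t in Ioi (1 + δ), (1 - rhoPow α t) / |t - 1| ^ (1 + 2 * s) =
      ∫ t in Ioo 0 (1 + δ)⁻¹, (symmKernel s α t - innerKernel s α t) := by
  have hc0 : 0 < (1 + δ)⁻¹ := by positivity
  have hc1 : (1 + δ)⁻¹ < 1 := inv_lt_one_of_one_lt₀ (by linarith)
  have himg : (fun t : ℝ => t⁻¹) '' Ioo 0 (1 + δ)⁻¹ = Ioi (1 + δ) := by
    rw [Set.image_inv_eq_inv, Set.inv_Ioo_0_left hc0, inv_inv]
  have hder : ∀ t ∈ Ioo 0 (1 + δ)⁻¹,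
      HasDerivWithinAt (fun t : ℝ => t⁻¹) (-(t ^ 2)⁻¹) (Ioo 0 (1 + δ)⁻¹) t :=
    fun t ht => (hasDerivAt_inv ht.1.ne').hasDerivWithinAt
  have hinj : InjOn (fun t : ℝ => t⁻¹) (Ioo 0 (1 + δ)⁻¹) := inv_injective.injOn
  have hpt : EqOn (fun t : ℝ => |(-(t ^ 2)⁻¹)| • ((1 - rhoPow α t⁻¹) / |t⁻¹ - 1| ^ (1 + 2 * s)))
      (fun t => symmKernel s α t - innerKernel s α t) (Ioo 0 (1 + δ)⁻¹) := by
    intro t ht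
    have ht0 := ht.1
    have h1 : 0 < 1 - t := by linarith [ht.2]
    have e1 : |t⁻¹ - 1| = (1 - t) / t := by
      rw [abs_of_nonneg, sub_div, div_self ht0.ne', one_div]
      have : 1 ≤ t⁻¹ := (one_le_inv₀ ht0).2 (by linarith)
      linarith
    have hta : 0 < t ^ α := Real.rpow_pos_of_pos ht0 _
    have e2 : t ^ (2 * s - 1 - α) = t ^ (1 + 2 * s) / (t ^ 2 * t ^ α) := by
      rw [show (2 * s - 1 - α) = (1 + 2 * s) - 2 - α by ring, Real.rpow_sub ht0,
        Real.rpow_sub ht0, div_div]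
      norm_cast
    have h2 := Real.rpow_pos_of_pos h1 (1 + 2 * s)
    have h3 := Real.rpow_pos_of_pos ht0 (1 + 2 * s)
    simp only [rhoPow, inv_pos, ht0, if_true, symmKernel, innerKernel, smul_eq_mul, abs_neg,
      e1, e2, Real.div_rpow h1.le ht0.le, Real.inv_rpow ht0.le]
    rw [abs_of_nonneg (by positivity)]
    field_simp
    ring
  constructor
  · rw [← himg, integrableOn_image_iff_integrableOn_abs_deriv_smul measurableSet_Ioo hder hinj]
    refine IntegrableOn.congr_fun ?_ hpt.symm measurableSet_Ioo
    exact ((symmKernel_integrableOn hs hα).mono_set (Ioo_subset_Ioo_right hc1.le)).sub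
      (innerKernel_integrableOn hα.1 hc1)
  · rw [← himg, integral_image_eq_integral_abs_deriv_smul measurableSet_Ioo hder hinj]
    exact setIntegral_congr_fun measurableSet_Ioo hpt

/-- The part `t ≤ 0`, where `ρ_α` vanishes. -/
lemma left_aux (hs : 0 < s) :
    IntegrableOn (fun t => (1 - rhoPow α t) / |t - 1| ^ (1 + 2 * s)) (Iic 0) ∧
    ∫ t in Iic 0, (1 - rhoPow α t) / |t - 1| ^ (1 + 2 * s) = 1 / (2 * s) := by
  have hmp := Measure.measurePreserving_sub_left (volume : Measure ℝ) 1
  have hemb := (MeasurableEquiv.subLeft (1 : ℝ)).measurableEmbedding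
  have hpre : (fun t : ℝ => 1 - t) ⁻¹' (Ici 1) = Iic 0 := by ext t; simp
  have hpt : EqOn (fun t : ℝ => (1 - t) ^ (-(1 + 2 * s)))
      (fun t => (1 - rhoPow α t) / |t - 1| ^ (1 + 2 * s)) (Iic 0) := by
    intro t ht
    have ht : t ≤ 0 := ht
    simp only [rhoPow, not_lt.2 ht, if_false, sub_zero]
    rw [abs_sub_comm, abs_of_nonneg (by linarith), Real.rpow_neg (by linarith), one_div]
  have hI : IntegrableOn (fun t : ℝ => t ^ (-(1 + 2 * s))) (Ici 1) := by
    rw [integrableOn_Ici_iff_integrableOn_Ioi]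
    exact integrableOn_Ioi_rpow_of_lt (by linarith) one_pos
  constructor
  · refine IntegrableOn.congr_fun ?_ hpt measurableSet_Iic
    rw [← hpre]
    exact (hmp.integrableOn_comp_preimage hemb).2 hI
  · rw [← setIntegral_congr_fun measurableSet_Iic hpt, ← hpre]
    refine (hmp.setIntegral_preimage_emb hemb (fun t : ℝ => t ^ (-(1 + 2 * s))) _).trans ?_
    rw [integral_Ici_eq_integral_Ioi, integral_Ioi_rpow_of_lt (by linarith) one_pos]
    simp only [Real.one_rpow]
    rw [show -(1 + 2 * s) + 1 = -(2 * s) by ring, neg_div_neg_eq]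

/-- The integral truncated at distance `δ` from `1`. Symmetric truncation in `t` is not symmetric
under inversion, which produces the correction term over `[1 - δ, 1/(1 + δ))`. -/
lemma unit_integrable (hs : s ∈ Ioo (0:ℝ) 1) (hα : α ∈ Ioo (0:ℝ) (2 * s)) {δ : ℝ}
    (hδ : δ ∈ Ioo (0:ℝ) 1) :
    IntegrableOn (fun t => (1 - rhoPow α t) / |t - 1| ^ (1 + 2 * s)) {t | δ < |t - 1|} ∧
    ∫ t in {t | δ < |t - 1|}, (1 - rhoPow α t) / |t - 1| ^ (1 + 2 * s) =
      1 / (2 * s) + (∫ t in Ioo 0 (1 + δ)⁻¹, symmKernel s α t)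
        - ∫ t in Ico (1 - δ) (1 + δ)⁻¹, innerKernel s α t := by
  obtain ⟨hδ0, hδ1⟩ := hδ
  set k : ℝ → ℝ := fun t => (1 - rhoPow α t) / |t - 1| ^ (1 + 2 * s)
  have hc0 : 0 < (1 + δ)⁻¹ := by positivity
  have hc1 : (1 + δ)⁻¹ < 1 := inv_lt_one_of_one_lt₀ (by linarith)
  have hcδ : 1 - δ ≤ (1 + δ)⁻¹ := by
    rw [← one_div, le_div_iff₀ (by linarith)]; nlinarith
  have hset : {t : ℝ | δ < |t - 1|} = (Iic 0 ∪ Ioo 0 (1 - δ)) ∪ Ioi (1 + δ) := by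
    ext t
    simp only [mem_ofPred_eq, mem_union, mem_Iic, mem_Ioo, mem_Ioi, lt_abs]
    constructor
    · rintro (h | h)
      · right; linarith
      · left
        rcases le_or_gt t 0 with h0 | h0
        · left; exact h0
        · right; exact ⟨h0, by linarith⟩
    · rintro ((h | h) | h)
      · right; linarith
      · right; linarith [h.2]
      · left; linarith
  obtain ⟨hO, hO'⟩ := outer_aux hs hα hδ0
  obtain ⟨hL, hL'⟩ := left_aux (α := α) hs.1
  have hpt : EqOn (innerKernel s α) k (Ioo 0 (1 - δ)) := by
    intro t ht
    simp only [k, innerKernel, rhoPow, ht.1, if_true]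
    rw [abs_sub_comm, abs_of_nonneg (by linarith [ht.2] : (0:ℝ) ≤ 1 - t)]
  have hM : IntegrableOn k (Ioo 0 (1 - δ)) :=
    (innerKernel_integrableOn hα.1 (by linarith)).congr_fun hpt measurableSet_Ioo
  have hM' : ∫ t in Ioo 0 (1 - δ), k t = ∫ t in Ioo 0 (1 - δ), innerKernel s α t :=
    (setIntegral_congr_fun measurableSet_Ioo hpt).symm
  rw [hset]
  refine ⟨(hL.union hM).union hO, ?_⟩
  have hSi := (symmKernel_integrableOn hs hα).mono_set (Ioo_subset_Ioo le_rfl hc1.le)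
  have hIi := innerKernel_integrableOn (s := s) hα.1 hc1
  rw [setIntegral_union _ measurableSet_Ioi (hL.union hM) hO,
    setIntegral_union _ measurableSet_Ioo hL hM, hL', hM', hO', integral_sub hSi hIi,
    ← Ioo_union_Ico_eq_Ioo (by linarith : 0 < 1 - δ) hcδ,
    setIntegral_union (f := innerKernel s α) _ measurableSet_Ico]
  · ring
  · exact hIi.mono_set (Ioo_subset_Ioo_right hcδ)
  · exact hIi.mono_set fun t ht => ⟨by linarith [ht.1], ht.2⟩
  · rw [Set.disjoint_left]; intro t h1 h2; linarith [h1.2, h2.1]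
  · rw [Set.disjoint_left]; intro t h1 h2; linarith [h2.1, mem_Iic.1 h1]
  · rw [Set.disjoint_left]; intro t h1 h2
    have := mem_Ioi.1 h2
    rcases h1 with h1 | h1
    · linarith [mem_Iic.1 h1]
    · linarith [h1.2]

/-- The correction term is `O(δ ^ (2 - 2s))`. -/
lemma inner_tendsto (hs : s ∈ Ioo (0:ℝ) 1) (hα : α ∈ Ioo (0:ℝ) (2 * s)) :
    Tendsto (fun δ : ℝ => ∫ t in Ico (1 - δ) (1 + δ)⁻¹, innerKernel s α t) (𝓝[>] 0) (𝓝 0) := by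
  obtain ⟨hs0, hs1⟩ := hs
  have hlim : Tendsto (fun δ : ℝ => 2 * (2:ℝ) ^ (2 * s) * δ ^ (2 - 2 * s)) (𝓝[>] 0) (𝓝 0) := by
    have : ContinuousAt (fun δ : ℝ => 2 * (2:ℝ) ^ (2 * s) * δ ^ (2 - 2 * s)) 0 :=
      continuousAt_const.mul (continuousAt_id.rpow_const (Or.inr (by linarith)))
    have h0 := this.tendsto.mono_left (nhdsWithin_le_nhds (s := Ioi 0))
    rwa [Real.zero_rpow (by linarith), mul_zero] at h0
  refine squeeze_zero_norm' ?_ hlim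
  filter_upwards [Ioo_mem_nhdsGT (zero_lt_one (α := ℝ))] with δ hδ
  obtain ⟨hδ0, hδ1⟩ := hδ
  have hc1 : (1 + δ)⁻¹ < 1 := inv_lt_one_of_one_lt₀ (by linarith)
  have hcδ : 1 - δ ≤ (1 + δ)⁻¹ := by
    rw [← one_div, le_div_iff₀ (by linarith)]; nlinarith
  have hcd : (1 + δ)⁻¹ ≤ 1 - δ / 2 := by
    rw [← one_div, div_le_iff₀ (by linarith)]; nlinarith
  -- The exact length is `δ² / (1 + δ)`.
  have hlen : (1 + δ)⁻¹ - (1 - δ) ≤ δ ^ 2 := by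
    have : (1 + δ)⁻¹ ≤ 1 - δ + δ ^ 2 := by
      rw [← one_div, div_le_iff₀ (by linarith)]; nlinarith [pow_pos hδ0 3]
    linarith
  have hb : ∀ t ∈ Ico (1 - δ) (1 + δ)⁻¹, ‖innerKernel s α t‖ ≤ 2 * (δ / 2) ^ (-(2 * s)) := by
    intro t ht
    have ht' : t ∈ Ioo (0:ℝ) 1 := ⟨by linarith [ht.1], by linarith [ht.2]⟩
    rw [Real.norm_of_nonneg (innerKernel_nonneg hα.1 ht')]
    refine (innerKernel_le (by linarith [hα.2]) ht').trans ?_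
    refine mul_le_mul_of_nonneg_left ?_ zero_le_two
    exact Real.rpow_le_rpow_of_nonpos (by linarith) (by linarith [ht.2]) (by linarith)
  refine (norm_setIntegral_le_of_norm_le_const (by simp) hb).trans ?_
  rw [Measure.real, Real.volume_Ico, ENNReal.toReal_ofReal (by linarith)]
  calc 2 * (δ / 2) ^ (-(2 * s)) * ((1 + δ)⁻¹ - (1 - δ)) ≤ 2 * (δ / 2) ^ (-(2 * s)) * δ ^ 2 := by
        gcongr
    _ = _ := by
        rw [Real.rpow_neg (by positivity), Real.div_rpow hδ0.le zero_le_two,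
          sub_eq_add_neg (2:ℝ), Real.rpow_add hδ0, Real.rpow_neg hδ0.le]
        norm_num
        field_simp

lemma unit_tendsto (hs : s ∈ Ioo (0:ℝ) 1) (hα : α ∈ Ioo (0:ℝ) (2 * s)) :
    Tendsto (fun δ : ℝ => ∫ t in {t | δ < |t - 1|}, (1 - rhoPow α t) / |t - 1| ^ (1 + 2 * s))
      (𝓝[>] 0) (𝓝 (1 / (2 * s) + ∫ t in Ioo 0 1, symmKernel s α t)) := by
  have hcov : Tendsto (fun δ : ℝ => ∫ t in Ioo 0 (1 + δ)⁻¹, symmKernel s α t) (𝓝[>] 0)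
      (𝓝 (∫ t in Ioo 0 1, symmKernel s α t)) := by
    have hc : Tendsto (fun δ : ℝ => (1 + δ)⁻¹) (𝓝[>] 0) (𝓝 1) := by
      have : ContinuousAt (fun δ : ℝ => (1 + δ)⁻¹) 0 :=
        (continuousAt_const.add continuousAt_id).inv₀ (by norm_num)
      have h0 := this.tendsto.mono_left (nhdsWithin_le_nhds (s := Ioi 0))
      simpa using h0
    have hae := aecover_Ioo_of_Ioo (μ := volume) (l := 𝓝[>] (0:ℝ)) (a := fun _ => (0:ℝ))
      tendsto_const_nhds hc
    have h := hae.integral_tendsto_of_countably_generated (symmKernel_integrableOn hs hα)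
    refine h.congr' ?_
    filter_upwards [self_mem_nhdsWithin] with δ hδ
    have hδ : 0 < δ := hδ
    have hc1 : (1 + δ)⁻¹ < 1 := inv_lt_one_of_one_lt₀ (by linarith)
    rw [Measure.restrict_restrict measurableSet_Ioo,
      inter_eq_left.2 (Ioo_subset_Ioo_right hc1.le)]
  have h := (hcov.const_add (1 / (2 * s))).sub (inner_tendsto hs hα)
  rw [sub_zero] at h
  refine h.congr' ?_
  filter_upwards [Ioo_mem_nhdsGT (zero_lt_one (α := ℝ))] with δ hδ
  exact (unit_integrable hs hα hδ).2.symm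

end

/-! ### Reduction to one dimension -/

section
variable {s α : ℝ}

/-- The substitution `t = a τ` moves the base point from `a` to `1`; the truncation at distance `ε`
becomes truncation at distance `ε / a`. -/
lemma scaled_halfline (hs : s ∈ Ioo (0:ℝ) 1) (hα : α ∈ Ioo (0:ℝ) (2 * s)) {a ε : ℝ} (ha : 0 < a)
    (hε : 0 < ε) :
    IntegrableOn (fun t => (rhoPow α a - rhoPow α t) / |t - a| ^ (1 + 2 * s)) {t | ε < |t - a|} ∧
    ∫ t in {t | ε < |t - a|}, (rhoPow α a - rhoPow α t) / |t - a| ^ (1 + 2 * s) =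
      a ^ (α - 2 * s) *
        ∫ t in {t | ε / a < |t - 1|}, (1 - rhoPow α t) / |t - 1| ^ (1 + 2 * s) := by
  have hm : MeasurableSet {t : ℝ | ε / a < |t - 1|} :=
    measurableSet_lt measurable_const (by fun_prop)
  have himg : (fun t : ℝ => a * t) '' {t | ε / a < |t - 1|} = {t | ε < |t - a|} := by
    ext t
    simp only [mem_image, mem_ofPred_eq]
    constructor
    · rintro ⟨u, hu, rfl⟩
      rw [div_lt_iff₀ ha] at hu
      rwa [show a * u - a = (u - 1) * a by ring, abs_mul, abs_of_pos ha]
    · intro h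
      refine ⟨t / a, ?_, by field_simp⟩
      rw [show t / a - 1 = (t - a) / a by field_simp, abs_div, abs_of_pos ha]
      exact div_lt_div_of_pos_right h ha
  have hder : ∀ t ∈ {t : ℝ | ε / a < |t - 1|},
      HasDerivWithinAt (fun t : ℝ => a * t) a {t : ℝ | ε / a < |t - 1|} t := fun t _ => by
    simpa using ((hasDerivAt_id t).const_mul a).hasDerivWithinAt
  have hinj : InjOn (fun t : ℝ => a * t) {t : ℝ | ε / a < |t - 1|} :=
    (mul_right_injective₀ ha.ne').injOn
  have hpt : ∀ t : ℝ, |a| • ((rhoPow α a - rhoPow α (a * t)) / |a * t - a| ^ (1 + 2 * s)) =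
      a ^ (α - 2 * s) * ((1 - rhoPow α t) / |t - 1| ^ (1 + 2 * s)) := by
    intro t
    have e1 : rhoPow α (a * t) = a ^ α * rhoPow α t := by
      unfold rhoPow
      simp only [mul_pos_iff_of_pos_left ha]
      split_ifs with h
      · exact Real.mul_rpow ha.le h.le
      · simp
    have e2 : rhoPow α a = a ^ α := if_pos ha
    rw [show a * t - a = a * (t - 1) by ring, abs_mul, abs_of_pos ha,
      Real.mul_rpow ha.le (abs_nonneg _), e1, e2, Real.rpow_add ha, Real.rpow_one,
      Real.rpow_sub ha, smul_eq_mul]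
    have := Real.rpow_pos_of_pos ha (2 * s)
    rw [show a ^ α - a ^ α * rhoPow α t = a ^ α * (1 - rhoPow α t) by ring]
    rw [mul_div_mul_comm, ← mul_assoc]
    congr 1
    field_simp
  -- `unit_integrable` asks for a truncation below `1`, so a larger one is shrunk first.
  have hint : IntegrableOn (fun t => (1 - rhoPow α t) / |t - 1| ^ (1 + 2 * s))
      {t | ε / a < |t - 1|} := by
    refine (unit_integrable hs hα (δ := min (ε / a) (1 / 2))
      ⟨lt_min (by positivity) (by norm_num), ?_⟩).1.mono_set ?_
    · exact (min_le_right _ _).trans_lt (by norm_num)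
    · intro t ht
      have ht : ε / a < |t - 1| := ht
      exact (min_le_left _ _).trans_lt ht
  constructor
  · rw [← himg, integrableOn_image_iff_integrableOn_abs_deriv_smul hm hder hinj]
    simp only [hpt]
    exact hint.const_mul _
  · rw [← himg, integral_image_eq_integral_abs_deriv_smul hm hder hinj]
    simp only [hpt]
    exact integral_const_mul _ _

/-- The kernel integrated over a hyperplane at distance `r`, by the substitution `z = c - r w`. -/
lemma slice (m : ℕ) (hs : 0 < s) {r : ℝ} (hr : 0 < r) (c : EuclideanSpace ℝ (Fin m)) :
    Integrable (fun z => (r ^ 2 + ‖c - z‖ ^ 2) ^ (-(((m : ℝ) + 1) + 2 * s) / 2)) ∧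
    ∫ z, (r ^ 2 + ‖c - z‖ ^ 2) ^ (-(((m : ℝ) + 1) + 2 * s) / 2) =
      Aconst m s / r ^ (1 + 2 * s) := by
  set p : ℝ := ((m : ℝ) + 1) + 2 * s with hp
  set G : EuclideanSpace ℝ (Fin m) → ℝ := fun w => (1 + ‖w‖ ^ 2) ^ (-p / 2) with hG
  have hGi : Integrable G := integrable_rpow_neg_one_add_norm_sq (by
    rw [finrank_euclideanSpace_fin]; linarith)
  have hpt : ∀ z, (r ^ 2 + ‖c - z‖ ^ 2) ^ (-p / 2) = r ^ (-p) * G (r⁻¹ • (c - z)) := by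
    intro z
    have e : r ^ 2 + ‖c - z‖ ^ 2 = r ^ 2 * (1 + ‖r⁻¹ • (c - z)‖ ^ 2) := by
      rw [norm_smul, norm_inv, Real.norm_of_nonneg hr.le]; field_simp
    rw [e, Real.mul_rpow (by positivity) (by positivity), ← Real.rpow_natCast r 2,
      ← Real.rpow_mul hr.le]
    congr 2
    push_cast; ring
  simp only [hpt]
  constructor
  · exact (((integrable_comp_smul_iff volume G (inv_ne_zero hr.ne')).2 hGi).comp_sub_left
      c).const_mul _
  · rw [integral_const_mul, integral_sub_left_eq_self (fun w => G (r⁻¹ • w)) volume c,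
      Measure.integral_comp_inv_smul_of_nonneg volume G hr.le, finrank_euclideanSpace_fin,
      smul_eq_mul]
    have e3 : ∫ w, G w = Aconst m s := rfl
    rw [e3, ← Real.rpow_natCast r m, ← mul_assoc, ← Real.rpow_add hr,
      show -p + (m : ℝ) = -(1 + 2 * s) by rw [hp]; ring, Real.rpow_neg hr.le]
    ring

/-- Integration over the slab `S × ℝ^m` reduces to a one-dimensional integral. -/
lemma fubini_prod (m : ℕ) (hs : 0 < s) {a : ℝ} (c : EuclideanSpace ℝ (Fin m)) {g : ℝ → ℝ}
    (hg : Measurable g) {S : Set ℝ} (hS : MeasurableSet S) (haS : a ∉ S)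
    (hi : IntegrableOn (fun t => g t / |t - a| ^ (1 + 2 * s)) S) :
    IntegrableOn (fun q : ℝ × EuclideanSpace ℝ (Fin m) =>
      g q.1 * ((q.1 - a) ^ 2 + ‖c - q.2‖ ^ 2) ^ (-(((m : ℝ) + 1) + 2 * s) / 2)) (S ×ˢ univ) ∧
    ∫ q in S ×ˢ (univ : Set (EuclideanSpace ℝ (Fin m))),
      g q.1 * ((q.1 - a) ^ 2 + ‖c - q.2‖ ^ 2) ^ (-(((m : ℝ) + 1) + 2 * s) / 2) =
      Aconst m s * ∫ t in S, g t / |t - a| ^ (1 + 2 * s) := by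
  have hμ : (volume : Measure (ℝ × EuclideanSpace ℝ (Fin m))).restrict (S ×ˢ univ) =
      (volume.restrict S).prod volume := by
    rw [Measure.volume_eq_prod, ← Measure.prod_restrict, Measure.restrict_univ]
  have hpos : ∀ t ∈ S, 0 < |t - a| := fun t ht =>
    abs_pos.2 (sub_ne_zero.2 fun h => haS (h ▸ ht))
  rw [IntegrableOn, hμ]
  have hint : Integrable (fun q : ℝ × EuclideanSpace ℝ (Fin m) =>
      g q.1 * ((q.1 - a) ^ 2 + ‖c - q.2‖ ^ 2) ^ (-(((m : ℝ) + 1) + 2 * s) / 2))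
      ((volume.restrict S).prod volume) := by
    rw [integrable_prod_iff (by fun_prop)]
    constructor
    · filter_upwards [ae_restrict_mem hS] with t ht
      have h := (slice m hs (hpos t ht) c).1
      simp only [sq_abs] at h
      exact h.const_mul _
    · refine (hi.norm.const_mul (Aconst m s)).congr ?_
      filter_upwards [ae_restrict_mem hS] with t ht
      have h := (slice m hs (hpos t ht) c).2
      simp only [sq_abs] at h
      have e : ∀ z, ‖g t * ((t - a) ^ 2 + ‖c - z‖ ^ 2) ^ (-(((m : ℝ) + 1) + 2 * s) / 2)‖ =
          ‖g t‖ * ((t - a) ^ 2 + ‖c - z‖ ^ 2) ^ (-(((m : ℝ) + 1) + 2 * s) / 2) := fun z => by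
        rw [norm_mul, Real.norm_of_nonneg (by positivity : 0 ≤
          ((t - a) ^ 2 + ‖c - z‖ ^ 2) ^ (-(((m : ℝ) + 1) + 2 * s) / 2))]
      simp only [e]
      rw [integral_const_mul, h, norm_div,
        Real.norm_of_nonneg (by positivity : 0 ≤ |t - a| ^ (1 + 2 * s))]
      ring
  refine ⟨hint, ?_⟩
  rw [integral_prod _ hint, ← integral_const_mul]
  refine setIntegral_congr_fun hS fun t ht => ?_
  have h := (slice m hs (hpos t ht) c).2
  simp only [sq_abs] at h
  simp only
  rw [integral_const_mul, h]
  ring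

end

/-- The coordinates `y ↦ (yₙ, y′)`, with the Euclidean norm kept on `y′`. -/
noncomputable def splitLast (m : ℕ) :
    EuclideanSpace ℝ (Fin (m + 1)) ≃ᵐ ℝ × EuclideanSpace ℝ (Fin m) :=
  ((MeasurableEquiv.toLp 2 (Fin (m + 1) → ℝ)).symm.trans
    (MeasurableEquiv.piFinSuccAbove (fun _ => ℝ) (Fin.last m))).trans
    ((MeasurableEquiv.refl ℝ).prodCongr (MeasurableEquiv.toLp 2 (Fin m → ℝ)))

lemma splitLast_measurePreserving (m : ℕ) : MeasurePreserving (splitLast m) := by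
  have h1 := EuclideanSpace.volume_preserving_symm_measurableEquiv_toLp (Fin (m + 1))
  have h2 := volume_preserving_piFinSuccAbove (fun _ : Fin (m + 1) => ℝ) (Fin.last m)
  have h3 := (MeasurePreserving.id (volume : Measure ℝ)).prod
    (PiLp.volume_preserving_toLp (Fin m))
  exact h3.comp (h2.comp h1)

lemma splitLast_fst (m : ℕ) (y : EuclideanSpace ℝ (Fin (m + 1))) :
    (splitLast m y).1 = y (Fin.last m) := rfl

lemma splitLast_norm (m : ℕ) (x y : EuclideanSpace ℝ (Fin (m + 1))) :
    ‖x - y‖ ^ 2 = ((splitLast m y).1 - (splitLast m x).1) ^ 2 +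
      ‖(splitLast m x).2 - (splitLast m y).2‖ ^ 2 := by
  rw [EuclideanSpace.real_norm_sq_eq, EuclideanSpace.real_norm_sq_eq,
    Fin.sum_univ_succAbove _ (Fin.last m)]
  congr 1
  simp only [splitLast_fst, PiLp.sub_apply]
  ring

/-- For `n = m+1 ≥ 2`, `s ∈ (0,1)`, `α ∈ (0,2s)` and `x ∈ ℝⁿ` with `xₙ > 0`:
for each `ε > 0` the integral of `(ρ_α(xₙ) − ρ_α(yₙ))/|x−y|^{n+2s}` over
`{|yₙ − xₙ| > ε}` is absolutely convergent, and the principal-value limit as `ε → 0⁺`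
exists and equals `A(n,s)·q(s,α)·xₙ^{α−2s}`. -/
theorem stmt5 (m : ℕ) (hm : 1 ≤ m) (s α : ℝ) (hs : s ∈ Set.Ioo (0:ℝ) 1)
    (hα : α ∈ Set.Ioo (0:ℝ) (2 * s))
    (x : EuclideanSpace ℝ (Fin (m + 1))) (hx : 0 < x (Fin.last m)) :
    (∀ ε : ℝ, 0 < ε →
      IntegrableOn
        (fun y : EuclideanSpace ℝ (Fin (m + 1)) =>
          (rhoPow α (x (Fin.last m)) - rhoPow α (y (Fin.last m))) /
            ‖x - y‖ ^ (((m : ℝ) + 1) + 2 * s))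
        {y : EuclideanSpace ℝ (Fin (m + 1)) | ε < |y (Fin.last m) - x (Fin.last m)|}) ∧
    Tendsto
      (fun ε : ℝ =>
        ∫ y in {y : EuclideanSpace ℝ (Fin (m + 1)) |
            ε < |y (Fin.last m) - x (Fin.last m)|},
          (rhoPow α (x (Fin.last m)) - rhoPow α (y (Fin.last m))) /
            ‖x - y‖ ^ (((m : ℝ) + 1) + 2 * s))
      (𝓝[>] 0) (𝓝 (Aconst m s * qfun s α * (x (Fin.last m)) ^ (α - 2 * s))) := by
  set a := x (Fin.last m) with ha
  have hmp := splitLast_measurePreserving m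
  have hemb := (splitLast m).measurableEmbedding
  have hg : Measurable fun t => rhoPow α a - rhoPow α t := by
    unfold rhoPow
    exact measurable_const.sub (Measurable.ite measurableSet_Ioi (by fun_prop) measurable_const)
  have hS : ∀ ε : ℝ, MeasurableSet {t : ℝ | ε < |t - a|} := fun ε =>
    measurableSet_lt measurable_const (by fun_prop)
  have hpre : ∀ ε : ℝ, {y : EuclideanSpace ℝ (Fin (m + 1)) | ε < |y (Fin.last m) - a|} =
      splitLast m ⁻¹' ({t : ℝ | ε < |t - a|} ×ˢ univ) := fun ε => by
    ext y; simp [splitLast_fst]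
  -- The integrand in the coordinates `(yₙ, y′)`.
  set F : ℝ × EuclideanSpace ℝ (Fin m) → ℝ := fun q => (rhoPow α a - rhoPow α q.1) *
    ((q.1 - a) ^ 2 + ‖(splitLast m x).2 - q.2‖ ^ 2) ^ (-(((m : ℝ) + 1) + 2 * s) / 2) with hF
  have hpt : (fun y : EuclideanSpace ℝ (Fin (m + 1)) =>
      (rhoPow α a - rhoPow α (y (Fin.last m))) / ‖x - y‖ ^ (((m : ℝ) + 1) + 2 * s)) =
      F ∘ splitLast m := by
    ext y
    have h := splitLast_norm m x y
    rw [splitLast_fst m x, ← ha] at h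
    simp only [Function.comp_apply, hF]
    rw [← h, ← Real.rpow_natCast ‖x - y‖ 2, ← Real.rpow_mul (norm_nonneg _), splitLast_fst,
      div_eq_mul_inv, ← Real.rpow_neg (norm_nonneg _)]
    congr 2
    push_cast; ring
  have key : ∀ ε : ℝ, 0 < ε → _ := fun ε hε =>
    fubini_prod m hs.1 (a := a) (splitLast m x).2 hg (hS ε) (by simpa using hε.le)
      (scaled_halfline hs hα hx hε).1
  constructor
  · intro ε hε
    rw [hpre, hpt]
    exact (hmp.integrableOn_comp_preimage hemb).2 (key ε hε).1
  · have hq : qfun s α = 1 / (2 * s) + ∫ t in Ioo 0 1, symmKernel s α t := by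
      rw [qfun, sub_eq_add_neg, ← integral_neg]
      congr 2
      ext t
      unfold symmKernel
      ring
    have hδ : Tendsto (fun ε : ℝ => ε / a) (𝓝[>] 0) (𝓝[>] 0) := by
      refine tendsto_nhdsWithin_iff.2 ⟨?_, ?_⟩
      · have : ContinuousAt (fun ε : ℝ => ε / a) 0 := by fun_prop
        have h0 := this.tendsto.mono_left (nhdsWithin_le_nhds (s := Ioi 0))
        simpa using h0
      · filter_upwards [self_mem_nhdsWithin] with ε hε
        exact div_pos hε hx
    have h := (((unit_tendsto hs hα).comp hδ).const_mul (a ^ (α - 2 * s))).const_mul (Aconst m s)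
    rw [← hq, mul_comm (a ^ (α - 2 * s)), ← mul_assoc] at h
    refine h.congr' ?_
    filter_upwards [self_mem_nhdsWithin] with ε hε
    have hε : 0 < ε := hε
    rw [hpre, hpt]
    refine Eq.trans ?_ (hmp.setIntegral_preimage_emb hemb F _).symm
    rw [(key ε hε).2, (scaled_halfline hs hα hx hε).2]
    rfl
end
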